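/- There exist finitely many physical measures such that the union of their basins of attraction covers X Leb-almost everywhere if and only if the set O of observable measures is finite; and in this case O = Phy, i.e. the observable measures are exactly the physical measures. -/

import Mathlib

open MeasureTheory Filter Topology
open scoped ENNReal

/-- The empirical probability measure `γ_{n+1,x} = (1/(n+1)) ∑_{j≤n} δ_{T^j x}` of the orbit
of `x` (indexed so that it is a probability measure for every index). -/
noncomputable def empiricalPM {X : Type*} [MeasurableSpace X] (T : X → X) (x : X) (n : ℕ) :
    MeasureTheory.ProbabilityMeasure X :=
  ⟨(n + 1 : ℝ≥0∞)⁻¹ • ∑ j ∈ Finset.range (n + 1), MeasureTheory.Measure.dirac (T^[j] x), by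
    constructor
    rw [Measure.smul_apply, Measure.finset_sum_apply]
    simp
    rw [ENNReal.inv_mul_cancel] <;> simp⟩

/-- The set `V(x)` of weak* limit points of the sequence of empirical measures of `x`. -/
def limitSet {X : Type*} [MeasurableSpace X] [TopologicalSpace X] [OpensMeasurableSpace X]
    (T : X → X) (x : X) : Set (MeasureTheory.ProbabilityMeasure X) :=
  {μ | ∃ φ : ℕ → ℕ, StrictMono φ ∧ Tendsto (fun j => empiricalPM T x (φ j)) atTop (𝓝 μ)}

/-- `μ` is an observable (physical-like) measure for `(X, T, Leb)`: every weak* neighbourhood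
`U` of `μ` (equivalently, every ε-ball around `μ` in a compatible metric) is intersected by
`V(x)` for a positive `Leb`-measure set of points `x`. -/
def IsObservable {X : Type*} [MeasurableSpace X] [TopologicalSpace X] [OpensMeasurableSpace X]
    (Leb : MeasureTheory.Measure X) (T : X → X) (μ : MeasureTheory.ProbabilityMeasure X) : Prop :=
  ∀ U : Set (MeasureTheory.ProbabilityMeasure X), IsOpen U → μ ∈ U →
    0 < Leb {x | (limitSet T x ∩ U).Nonempty}

/-- The Lyapunov exponent `χ(μ, Φ) = lim_n (1/n) ∫ log φ_n dμ` of a potential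
`Φ = {log φ_n}` (for invariant `μ` the limit exists by subadditivity, so it equals the
`liminf` used here); it takes values in `[-∞, ∞)`, i.e. in `EReal`. -/
noncomputable def lyapExp {X : Type*} [MeasurableSpace X] (φ : ℕ → X → ℝ)
    (μ : MeasureTheory.Measure X) : EReal :=
  liminf (fun n : ℕ => (((n : ℝ)⁻¹ * ∫ x, Real.log (φ n x) ∂μ : ℝ) : EReal)) atTop

/-- `μ` is a physical measure: its basin of attraction `B(μ) = {x : V(x) = {μ}}` has positive
`Leb`-measure. -/
def IsPhysical {X : Type*} [MeasurableSpace X] [TopologicalSpace X] [OpensMeasurableSpace X]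
    (Leb : MeasureTheory.Measure X) (T : X → X) (μ : MeasureTheory.ProbabilityMeasure X) : Prop :=
  0 < Leb {x | limitSet T x = {μ}}

section RealSequences

/-- A real sequence whose steps tend to zero, and which is frequently below and frequently above
`c`, accumulates at `c`. -/
lemma mapClusterPt_of_frequently_lt_of_frequently_gt {a : ℕ → ℝ} {c : ℝ}
    (hstep : Tendsto (fun n => a (n + 1) - a n) atTop (𝓝 0))
    (hlo : ∃ᶠ n in atTop, a n < c) (hhi : ∃ᶠ n in atTop, c < a n) :
    MapClusterPt c atTop a := by
  rw [Metric.nhds_basis_ball.mapClusterPt_iff_frequently]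
  intro ε hε
  rw [frequently_atTop]
  intro N
  obtain ⟨M, hM⟩ := eventually_atTop.1 (Metric.tendsto_nhds.1 hstep ε hε)
  obtain ⟨n, hn, hnc⟩ := frequently_atTop.1 hlo (max N M)
  obtain ⟨m, hm, hmc⟩ := frequently_atTop.1 hhi n
  have hex : ∃ k, c < a (n + k) := ⟨m - n, by rwa [Nat.add_sub_cancel' hm]⟩
  classical
  obtain ⟨k, hk⟩ : ∃ k, Nat.find hex = k + 1 := by
    refine Nat.exists_eq_succ_of_ne_zero fun h0 => ?_
    have := Nat.find_spec hex
    rw [h0, add_zero] at this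
    exact lt_asymm this hnc
  have hup : c < a (n + k + 1) := by
    have := Nat.find_spec hex
    rwa [hk, ← add_assoc] at this
  have hdown : a (n + k) ≤ c := not_lt.1 (Nat.find_min hex (by omega))
  have hd := hM (n + k) (by omega)
  rw [Real.dist_eq, sub_zero, abs_lt] at hd
  refine ⟨n + k, by omega, ?_⟩
  rw [Metric.mem_ball, Real.dist_eq, abs_lt]
  constructor <;> linarith [hd.2]

end RealSequences

section EmpiricalMeasures

lemma IsPhysical.isObservable {X : Type*} [MeasurableSpace X] [TopologicalSpace X]
    [OpensMeasurableSpace X] {Leb : Measure X} {T : X → X}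
    {μ : ProbabilityMeasure X}
    (h : IsPhysical Leb T μ) : IsObservable Leb T μ := by
  intro U _ hμU
  refine lt_of_lt_of_le h (measure_mono fun x hx => ⟨μ, ?_, hμU⟩)
  rw [Set.mem_ofPred_eq] at hx
  simp [hx]

variable {X : Type*} [MetricSpace X] [CompactSpace X] [MeasurableSpace X] [BorelSpace X]

lemma integral_empiricalPM (T : X → X) (x : X) (n : ℕ) (f : BoundedContinuousFunction X ℝ) :
    ∫ y, f y ∂(empiricalPM T x n : Measure X) =
      (n + 1 : ℝ)⁻¹ * ∑ j ∈ Finset.range (n + 1), f (T^[j] x) := by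
  have h : (empiricalPM T x n : Measure X) =
      (n + 1 : ℝ≥0∞)⁻¹ • ∑ j ∈ Finset.range (n + 1), Measure.dirac (T^[j] x) := rfl
  rw [h, integral_smul_measure, integral_finsetSum_measure fun j _ => f.integrable _]
  simp only [integral_dirac, smul_eq_mul, ENNReal.toReal_inv]
  congr 2

lemma continuous_empiricalPM {T : X → X} (hT : Continuous T) (n : ℕ) :
    Continuous fun x => empiricalPM T x n := by
  rw [ProbabilityMeasure.continuous_iff_forall_continuous_integral]
  intro f
  simp only [integral_empiricalPM]
  exact continuous_const.mul
    (continuous_finsetSum _ fun j _ => f.continuous.comp (hT.iterate j))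

lemma tendsto_integral_empiricalPM_succ_sub (T : X → X) (x : X)
    (f : BoundedContinuousFunction X ℝ) :
    Tendsto (fun n => ∫ y, f y ∂(empiricalPM T x (n + 1) : Measure X) -
      ∫ y, f y ∂(empiricalPM T x n : Measure X)) atTop (𝓝 0) := by
  have hlim : Tendsto (fun n : ℕ => 2 * ‖f‖ * (1 / ((n : ℝ) + 1))) atTop (𝓝 0) := by
    simpa using tendsto_one_div_add_atTop_nhds_zero_nat.const_mul (2 * ‖f‖)
  have hlim' := hlim.comp (tendsto_add_atTop_nat 1)
  refine squeeze_zero_norm (fun n => ?_) hlim'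
  set A : ℝ := ∫ y, f y ∂(empiricalPM T x n : Measure X) with hA
  have hAle : |A| ≤ ‖f‖ := by
    simpa using f.norm_integral_le_norm (empiricalPM T x n : Measure X)
  have hstep : ∫ y, f y ∂(empiricalPM T x (n + 1) : Measure X) - A =
      (f (T^[n + 1] x) - A) * (1 / ((n : ℝ) + 1 + 1)) := by
    have hn : (n : ℝ) + 1 ≠ 0 := by positivity
    have hn' : (n : ℝ) + 1 + 1 ≠ 0 := by positivity
    rw [hA, integral_empiricalPM, integral_empiricalPM, Finset.sum_range_succ _ (n + 1)]
    push_cast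
    field_simp
    ring
  have hfle : |f (T^[n + 1] x)| ≤ ‖f‖ := f.norm_coe_le_norm _
  rw [hstep, norm_mul, Real.norm_eq_abs, Real.norm_eq_abs, Function.comp_apply,
    abs_of_pos (show (0 : ℝ) < 1 / ((n : ℝ) + 1 + 1) by positivity)]
  push_cast
  gcongr
  linarith [abs_sub (f (T^[n + 1] x)) A]

instance : SecondCountableTopology (ProbabilityMeasure X) := by
  let _ := TopologicalSpace.metrizableSpaceMetric (ProbabilityMeasure X)
  infer_instance

lemma mem_limitSet_iff_mapClusterPt {T : X → X} {x : X} {μ : ProbabilityMeasure X} :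
    μ ∈ limitSet T x ↔ MapClusterPt μ atTop (empiricalPM T x) := by
  constructor
  · rintro ⟨φ, hφ, h⟩
    exact h.mapClusterPt.of_comp hφ.tendsto_atTop
  · intro h
    exact MapClusterPt.tendsto_subseq h

lemma limitSet_nonempty (T : X → X) (x : X) : (limitSet T x).Nonempty := by
  obtain ⟨μ, φ, hφ, h⟩ := CompactSpace.tendsto_subseq (empiricalPM T x)
  exact ⟨μ, φ, hφ, h⟩

lemma limitSet_eq_singleton_iff {T : X → X} {x : X} {μ : ProbabilityMeasure X} :
    limitSet T x = {μ} ↔ Tendsto (empiricalPM T x) atTop (𝓝 μ) := by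
  constructor
  · intro h
    refine isCompact_univ.tendsto_nhds_of_unique_mapClusterPt (by simp) fun ν _ hν => ?_
    simpa [h] using mem_limitSet_iff_mapClusterPt.2 hν
  · intro h
    refine Set.eq_singleton_iff_unique_mem.2 ⟨⟨id, strictMono_id, h⟩, ?_⟩
    rintro ν ⟨φ, hφ, hν⟩
    exact tendsto_nhds_unique hν (h.comp hφ.tendsto_atTop)

lemma measurableSet_limitSet_eq_singleton {T : X → X} (hT : Continuous T)
    (μ : ProbabilityMeasure X) : MeasurableSet {x | limitSet T x = {μ}} := by
  simp only [limitSet_eq_singleton_iff]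
  borelize (ProbabilityMeasure X)
  exact measurableSet_tendsto (𝓝 μ) fun n => (continuous_empiricalPM hT n).measurable

/-- Along an orbit, every value between two integrals against limit measures is itself the
integral against a limit measure. -/
lemma exists_mem_limitSet_integral_eq {T : X → X} {x : X} {μ ν : ProbabilityMeasure X}
    (hμ : μ ∈ limitSet T x) (hν : ν ∈ limitSet T x) (f : BoundedContinuousFunction X ℝ) {c : ℝ}
    (hμc : ∫ y, f y ∂(μ : Measure X) < c) (hcν : c < ∫ y, f y ∂(ν : Measure X)) :
    ∃ ρ ∈ limitSet T x, ∫ y, f y ∂(ρ : Measure X) = c := by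
  have hcont : Continuous fun ρ : ProbabilityMeasure X => ∫ y, f y ∂(ρ : Measure X) :=
    ProbabilityMeasure.continuous_integral_boundedContinuousFunction f
  have hclus := mapClusterPt_of_frequently_lt_of_frequently_gt
    (tendsto_integral_empiricalPM_succ_sub T x f)
    ((mem_limitSet_iff_mapClusterPt.1 hμ).frequently
      (hcont.continuousAt.eventually_lt_const hμc))
    ((mem_limitSet_iff_mapClusterPt.1 hν).frequently
      (hcont.continuousAt.eventually_const_lt hcν))
  obtain ⟨φ, hφ, hφc⟩ := MapClusterPt.tendsto_subseq hclus
  obtain ⟨ρ, ψ, hψ, hρ⟩ := CompactSpace.tendsto_subseq (empiricalPM T x ∘ φ)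
  exact ⟨ρ, ⟨φ ∘ ψ, hφ.comp hψ, hρ⟩,
    tendsto_nhds_unique ((hcont.tendsto ρ).comp hρ) (hφc.comp hψ.tendsto_atTop)⟩

lemma limitSet_subsingleton_of_finite {T : X → X} {x : X} (hfin : (limitSet T x).Finite) :
    (limitSet T x).Subsingleton := by
  intro μ hμ ν hν
  apply Subtype.ext
  refine ext_of_forall_integral_eq_of_IsFiniteMeasure (μ := (μ : Measure X))
    (ν := (ν : Measure X)) fun f => ?_
  have key : ∀ {ρ σ : ProbabilityMeasure X}, ρ ∈ limitSet T x → σ ∈ limitSet T x →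
      ¬ ∫ y, f y ∂(ρ : Measure X) < ∫ y, f y ∂(σ : Measure X) := by
    intro ρ σ hρ hσ hlt
    refine Set.Ioo_infinite hlt ((hfin.image
      fun τ : ProbabilityMeasure X => ∫ y, f y ∂(τ : Measure X)).subset ?_)
    rintro c ⟨h₁, h₂⟩
    exact exists_mem_limitSet_integral_eq hρ hσ f h₁ h₂
  exact le_antisymm (not_lt.1 (key hν hμ)) (not_lt.1 (key hμ hν))

lemma ae_limitSet_subset_observable (Leb : Measure X) (T : X → X) :
    ∀ᵐ x ∂Leb, limitSet T x ⊆ {μ | IsObservable Leb T μ} := by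
  have hnull : ∀ μ ∈ {μ | IsObservable Leb T μ}ᶜ, ∃ U : Set (ProbabilityMeasure X),
      IsOpen U ∧ μ ∈ U ∧ Leb {x | (limitSet T x ∩ U).Nonempty} = 0 := by
    intro μ hμ
    simpa [IsObservable] using hμ
  choose! U hUo hUmem hU using hnull
  obtain ⟨t, hts, htc, hcov⟩ := TopologicalSpace.countable_cover_nhdsWithin
    fun μ hμ => mem_nhdsWithin_of_mem_nhds ((hUo μ hμ).mem_nhds (hUmem μ hμ))
  have hae : ∀ᵐ x ∂Leb, ∀ μ ∈ t, ¬ (limitSet T x ∩ U μ).Nonempty :=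
    (ae_ball_iff htc).2 fun μ hμ => by simpa [ae_iff] using hU μ (hts hμ)
  filter_upwards [hae] with x hx μ hμ
  by_contra hμO
  obtain ⟨ν, hν, hμν⟩ := Set.mem_iUnion₂.1 (hcov hμO)
  exact hx ν hν ⟨μ, hμ, hμν⟩

/-- Finitely many basins of full measure contain all the observable measures among their
attractors. -/
lemma IsObservable.mem_of_measure_basins_eq_one {Leb : Measure X} [IsProbabilityMeasure Leb]
    {T : X → X} (hT : Continuous T) {P : Set (ProbabilityMeasure X)} (hP : P.Finite)
    (hcov : Leb (⋃ μ ∈ P, {x | limitSet T x = {μ}}) = 1) {μ : ProbabilityMeasure X}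
    (hμ : IsObservable Leb T μ) : μ ∈ P := by
  by_contra hμP
  refine (hμ Pᶜ hP.isClosed.isOpen_compl hμP).ne' (measure_mono_null ?_
    ((prob_compl_eq_zero_iff (hP.measurableSet_biUnion fun ν _ =>
      measurableSet_limitSet_eq_singleton hT ν)).2 hcov))
  rintro x ⟨ρ, hρx, hρP⟩ hx
  obtain ⟨ν, hν, hxν⟩ := Set.mem_iUnion₂.1 hx
  rw [Set.mem_ofPred_eq] at hxν
  rw [hxν, Set.mem_singleton_iff] at hρx
  exact hρP (hρx ▸ hν)

lemma measure_physical_basins_eq_one {Leb : Measure X} [IsProbabilityMeasure Leb] {T : X → X}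
    (hT : Continuous T) (hfin : {μ | IsObservable Leb T μ}.Finite) :
    Leb (⋃ μ ∈ {μ | IsPhysical Leb T μ}, {x | limitSet T x = {μ}}) = 1 := by
  have hPfin : {μ | IsPhysical Leb T μ}.Finite := hfin.subset fun _ h => h.isObservable
  rw [← prob_compl_eq_zero_iff (hPfin.measurableSet_biUnion fun ν _ =>
    measurableSet_limitSet_eq_singleton hT ν)]
  have hnull : ∀ᵐ x ∂Leb, ∀ μ ∈ {μ | IsObservable Leb T μ} \ {μ | IsPhysical Leb T μ},
      ¬ limitSet T x = {μ} := by
    refine (ae_ball_iff (hfin.subset Set.sdiff_subset).countable).2 fun μ hμ => ?_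
    simpa [ae_iff, IsPhysical] using hμ.2
  change ∀ᵐ x ∂Leb, x ∈ ⋃ μ ∈ {μ | IsPhysical Leb T μ}, {x | limitSet T x = {μ}}
  filter_upwards [hnull, ae_limitSet_subset_observable Leb T] with x hx hsub
  obtain ⟨μ, hμ⟩ := limitSet_nonempty T x
  have heq : limitSet T x = {μ} :=
    (limitSet_subsingleton_of_finite (hfin.subset hsub)).eq_singleton_of_mem hμ
  refine Set.mem_iUnion₂.2 ⟨μ, ?_, heq⟩
  by_contra hphys
  exact hx μ ⟨hsub hμ, hphys⟩ heq

end EmpiricalMeasures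

/-- **Theorem 2.3 ([CE11, Theorem 1.6]).** There are finitely many physical measures whose
basins of attraction cover `X` Lebesgue-almost everywhere if and only if the set `O` of
observable measures is finite; and in this case `O = Phy`. -/
theorem finitely_many_physical_iff_observable_finite
    {X : Type*} [MetricSpace X] [CompactSpace X] [MeasurableSpace X] [BorelSpace X]
    (T : X → X) (hT : IsHomeomorph T)
    (Leb : MeasureTheory.Measure X) [IsProbabilityMeasure Leb] :
    ((∃ P : Set (ProbabilityMeasure X), P.Finite ∧ (∀ μ ∈ P, IsPhysical Leb T μ) ∧
        Leb (⋃ μ ∈ P, {x | limitSet T x = {μ}}) = 1) ↔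
      {μ : ProbabilityMeasure X | IsObservable Leb T μ}.Finite) ∧
    ({μ : ProbabilityMeasure X | IsObservable Leb T μ}.Finite →
      {μ : ProbabilityMeasure X | IsObservable Leb T μ} =
        {μ : ProbabilityMeasure X | IsPhysical Leb T μ}) := by
  have hO : {μ : ProbabilityMeasure X | IsObservable Leb T μ}.Finite →
      {μ : ProbabilityMeasure X | IsObservable Leb T μ} =
        {μ : ProbabilityMeasure X | IsPhysical Leb T μ} := fun hfin =>
    Set.Subset.antisymm
      (fun _ hμ => IsObservable.mem_of_measure_basins_eq_one hT.continuous
        (hfin.subset fun _ h => IsPhysical.isObservable h)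
        (measure_physical_basins_eq_one hT.continuous hfin) hμ)
      fun _ h => IsPhysical.isObservable h
  refine ⟨⟨?_, fun hfin => ?_⟩, hO⟩
  · rintro ⟨P, hP, -, hcov⟩
    exact hP.subset fun μ hμ => IsObservable.mem_of_measure_basins_eq_one hT.continuous hP hcov hμ
  · exact ⟨{μ | IsPhysical Leb T μ}, hO hfin ▸ hfin, fun _ h => h,
      measure_physical_basins_eq_one hT.continuous hfin⟩
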